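/- arXiv:cs/0106008 — 2 statements merged into one kernel-verified Lean document; each statement's English description precedes it below -/
import Mathlib

section
/- Let L be a finite complete lattice and τ : ι → L → L a family of operators (ι a finite nonempty type) such that every τ i is monotone and deflationary. Let t : ℕ → ι be a fair index sequence. Then the trace from b along t is eventually constant, and its eventual value equals the greatest common fixpoint of the family below b. -/
/-!
A trace of deflationary operators descends, so well-foundedness forces it to stabilise. Fairness
applies every operator to the stable value, which is therefore a common fixpoint. It is the greatest
one below the starting point because, the operators being monotone, no step takes the trace below a
common fixpoint lying under it.
-/

open Filter

section Trace

variable {L ι : Type*} {τ : ι → L → L} {b : L} {t : ℕ → ι} {x : ℕ → L}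

/-- `t` is a fair index sequence: every index occurs infinitely often in it. -/
def IsFair (t : ℕ → ι) : Prop :=
  ∀ i, ∃ᶠ k in atTop, t k = i

/-- `x` is the trace from `b` along `t`: the iterates obtained by applying, at step `k`, the
operator `τ (t k)`. Being a trace is a predicate on sequences rather than a recursive function, so
that it applies to any sequence satisfying the recursion. -/
structure IsTrace (τ : ι → L → L) (b : L) (t : ℕ → ι) (x : ℕ → L) : Prop where
  zero : x 0 = b
  succ : ∀ k, x (k + 1) = τ (t k) (x k)

namespace IsTrace

theorem isFixedPt_of_eventually_eq (hx : IsTrace τ b t x) (ht : IsFair t) {a : L}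
    (ha : ∀ᶠ k in atTop, x k = a) (i : ι) : Function.IsFixedPt (τ i) a := by
  have ha_succ : ∀ᶠ k in atTop, x (k + 1) = a := (tendsto_add_atTop_nat 1).eventually ha
  obtain ⟨k, rfl, hk, hk_succ⟩ := ((ht i).and_eventually (ha.and ha_succ)).exists
  calc τ (t k) a = τ (t k) (x k) := by rw [hk]
    _ = x (k + 1) := (hx.succ k).symm
    _ = a := hk_succ

section Preorder

variable [Preorder L]

theorem antitone (hx : IsTrace τ b t x) (hdef : ∀ i y, τ i y ≤ y) : Antitone x :=
  antitone_nat_of_succ_le fun k => (hx.succ k).trans_le (hdef _ _)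

theorem le_of_forall_le_apply (hx : IsTrace τ b t x) (hmono : ∀ i, Monotone (τ i)) {y : L}
    (hyb : y ≤ b) (hy : ∀ i, y ≤ τ i y) (k : ℕ) : y ≤ x k := by
  induction k with
  | zero => exact hyb.trans_eq hx.zero.symm
  | succ k ih =>
    calc y ≤ τ (t k) y := hy (t k)
      _ ≤ τ (t k) (x k) := hmono (t k) ih
      _ = x (k + 1) := (hx.succ k).symm

theorem isGreatest_of_eventually_eq (hx : IsTrace τ b t x) (hmono : ∀ i, Monotone (τ i))
    (hdef : ∀ i y, τ i y ≤ y) (ht : IsFair t) {a : L} (ha : ∀ᶠ k in atTop, x k = a) :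
    IsGreatest {y | y ≤ b ∧ ∀ i, τ i y = y} a := by
  obtain ⟨k, rfl⟩ := ha.exists
  refine ⟨⟨?_, hx.isFixedPt_of_eventually_eq ht ha⟩, ?_⟩
  · exact (hx.antitone hdef k.zero_le).trans_eq hx.zero
  · rintro y ⟨hyb, hy⟩
    exact hx.le_of_forall_le_apply hmono hyb (fun i => (hy i).ge) k

end Preorder

end IsTrace

theorem stmt_2_general [PartialOrder L] [WellFoundedLT L] (hmono : ∀ i, Monotone (τ i))
    (hdef : ∀ i y, τ i y ≤ y) (ht : IsFair t) (hx : IsTrace τ b t x) :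
    ∃ N, (∀ k ≥ N, x k = x N) ∧ IsGreatest {y | y ≤ b ∧ ∀ i, τ i y = y} (x N) := by
  obtain ⟨N, hN⟩ := WellFoundedLT.antitone_chain_condition (hx.antitone hdef)
  have hconst : ∀ k ≥ N, x k = x N := fun k hk => (hN k hk).symm
  exact ⟨N, hconst, hx.isGreatest_of_eventually_eq hmono hdef ht (eventually_atTop.2 ⟨N, hconst⟩)⟩

end Trace

/-- In a finite complete lattice, a fair trace along monotone deflationary
operators is eventually constant, and its eventual value is the greatest
common fixpoint of the family below the starting element. -/
theorem stmt_2 {L ι : Type*} [CompleteLattice L] [Fintype L] [Fintype ι] [Nonempty ι]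
    (τ : ι → L → L) (hmono : ∀ i, Monotone (τ i)) (hdef : ∀ i x, τ i x ≤ x)
    (b : L) (t : ℕ → ι) (hfair : ∀ i : ι, ∀ N : ℕ, ∃ k ≥ N, t k = i)
    (x : ℕ → L) (hx0 : x 0 = b) (hxs : ∀ k, x (k + 1) = τ (t k) (x k)) :
    ∃ N, (∀ k ≥ N, x k = x N) ∧
      IsGreatest {y | y ≤ b ∧ ∀ i, τ i y = y} (x N) :=
  stmt_2_general hmono hdef (fun i => frequently_atTop.2 (hfair i)) ⟨hx0, hxs⟩
end

section
/- Let an interval constraint system on ℝⁿ be given, let B be a box, let i be a coordinate, and let a be a real number. If the system is failed below B ∩ {x | x i ≤ a} and also failed below B ∩ {x | a ≤ x i}, then the system has no solution lying in B. -/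
/-- A box in `ℝⁿ`: a product of convex subsets of `ℝ`. -/
def IsBox {n : ℕ} (B : Set (Fin n → ℝ)) : Prop :=
  ∃ I : Fin n → Set ℝ, (∀ j, Convex ℝ (I j)) ∧ B = Set.pi Set.univ I

/-- The contraction operator of a relation `r ⊆ ℝⁿ`. -/
def contractOp {n : ℕ} (r : Set (Fin n → ℝ)) (B : Set (Fin n → ℝ)) :
    Set (Fin n → ℝ) :=
  Set.pi Set.univ fun j => convexHull ℝ ((fun x => x j) '' (r ∩ B))

/-- Failure of an interval constraint system below a box. -/
def Failed {n m : ℕ} (r : Fin m → Set (Fin n → ℝ)) (B : Set (Fin n → ℝ)) : Prop :=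
  ∀ C : Set (Fin n → ℝ), IsBox C → C ⊆ B →
    (∀ i, contractOp (r i) C = C) → C = ∅

/-! A point satisfying every relation is, as a singleton box, fixed by every contraction operator:
these operators never enlarge a box and never discard a point of their relation. Hence no solution
lies in a set below which the system is failed, nor in a union of such sets. -/

section

variable {n m : ℕ}

theorem isBox_singleton (x : Fin n → ℝ) : IsBox {x} :=
  ⟨fun j => {x j}, fun j => convex_singleton (x j), (Set.univ_pi_singleton x).symm⟩

theorem inter_subset_contractOp (r B : Set (Fin n → ℝ)) : r ∩ B ⊆ contractOp r B :=
  fun _ hx _ _ => subset_convexHull ℝ _ (Set.mem_image_of_mem _ hx)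

theorem IsBox.contractOp_subset {B : Set (Fin n → ℝ)} (hB : IsBox B)
    (r : Set (Fin n → ℝ)) : contractOp r B ⊆ B := by
  obtain ⟨I, hI, rfl⟩ := hB
  refine Set.pi_mono fun j _ => convexHull_min ?_ (hI j)
  rintro _ ⟨x, ⟨-, hx⟩, rfl⟩
  exact hx j (Set.mem_univ j)

theorem IsBox.contractOp_eq_self {r B : Set (Fin n → ℝ)} (hB : IsBox B) (hBr : B ⊆ r) :
    contractOp r B = B :=
  (hB.contractOp_subset r).antisymm <|
    (Set.subset_inter hBr subset_rfl).trans (inter_subset_contractOp r B)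

theorem Failed.eq_empty_of_isBox {r : Fin m → Set (Fin n → ℝ)}
    {B C : Set (Fin n → ℝ)} (h : Failed r B) (hC : IsBox C) (hCB : C ⊆ B) (hCr : ∀ k, C ⊆ r k) :
    C = ∅ :=
  h C hC hCB fun k => hC.contractOp_eq_self (hCr k)

theorem Failed.notMem_of_forall_mem {r : Fin m → Set (Fin n → ℝ)}
    {B : Set (Fin n → ℝ)} {s : Fin n → ℝ} (h : Failed r B) (hs : ∀ k, s ∈ r k) : s ∉ B :=
  fun hsB => Set.singleton_ne_empty s <|
    h.eq_empty_of_isBox (isBox_singleton s) (Set.singleton_subset_iff.mpr hsB)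
      fun k => Set.singleton_subset_iff.mpr (hs k)

end

theorem stmt_8_general {n m : ℕ} (r : Fin m → Set (Fin n → ℝ)) (B : Set (Fin n → ℝ))
    (𝒞 : Set (Set (Fin n → ℝ))) (hcover : B ⊆ ⋃₀ 𝒞) (hfailed : ∀ C ∈ 𝒞, Failed r C) :
    ¬ ∃ s : Fin n → ℝ, (∀ k, s ∈ r k) ∧ s ∈ B := by
  rintro ⟨s, hs, hsB⟩
  obtain ⟨C, hC, hsC⟩ := hcover hsB
  exact (hfailed C hC).notMem_of_forall_mem hs hsC

/-- If probing with `x i ≤ a` and with `a ≤ x i` both yield failure, then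
the system has no solution in `B`. -/
theorem stmt_8 {n m : ℕ} (r : Fin m → Set (Fin n → ℝ))
    (B : Set (Fin n → ℝ)) (hB : IsBox B) (i : Fin n) (a : ℝ)
    (h₁ : Failed r (B ∩ {x | x i ≤ a}))
    (h₂ : Failed r (B ∩ {x | a ≤ x i})) :
    ¬ ∃ s : Fin n → ℝ, (∀ k, s ∈ r k) ∧ s ∈ B := by
  refine stmt_8_general r B {B ∩ {x | x i ≤ a}, B ∩ {x | a ≤ x i}}
    (fun x hx => ?_) (by simp [h₁, h₂])
  simpa [hx] using le_total (x i) a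
end
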